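/- arXiv:2510.19961 — 5 statements merged into one kernel-verified Lean document; each statement's English description precedes it below -/
import Mathlib

section
/- Let (Q,·,e) be a loop with principal right isostrophe (Q,∘), where x∘y = x/(y^r). For bijections α,β,γ : Q → Q, the triple (α,β,γ) is an autotopism of (Q,∘) if and only if (γ, ρ∘β∘λ, α) is an autotopism of (Q,·), where λ(x) = x^ℓ and ρ(x) = x^r. -/
/-- A loop `(Q, ·, e)`: a quasigroup with two-sided identity, presented with
explicit left division `ldiv a b = a \ b` and right division `rdiv b a = b / a`. -/
structure LoopStr (Q : Type*) where
  mul : Q → Q → Q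
  e : Q
  ldiv : Q → Q → Q
  rdiv : Q → Q → Q
  one_mul : ∀ x, mul e x = x
  mul_one : ∀ x, mul x e = x
  mul_ldiv : ∀ a b, mul a (ldiv a b) = b
  ldiv_mul : ∀ a b, ldiv a (mul a b) = b
  rdiv_mul : ∀ a b, mul (rdiv b a) a = b
  mul_rdiv : ∀ a b, rdiv (mul b a) a = b

namespace LoopStr

variable {Q : Type*} (S : LoopStr Q)

/-- The left inverse `x^ℓ = e / x`. -/
def linv (x : Q) : Q := S.rdiv S.e x

/-- The right inverse `x^r = x \ e`. -/
def rinv (x : Q) : Q := S.ldiv x S.e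

/-- The left nucleus. -/
def lnuc : Set Q := {a | ∀ x y, S.mul (S.mul a x) y = S.mul a (S.mul x y)}

/-- The middle nucleus. -/
def mnuc : Set Q := {a | ∀ x y, S.mul (S.mul x a) y = S.mul x (S.mul a y)}

/-- The right nucleus. -/
def rnuc : Set Q := {a | ∀ x y, S.mul (S.mul x y) a = S.mul x (S.mul y a)}

/-- The commutant `C(Q)`. -/
def commutant : Set Q := {a | ∀ x, S.mul a x = S.mul x a}

/-- The center `Z(Q) = C(Q) ∩ Nuc_ℓ ∩ Nuc_m ∩ Nuc_r`. -/
def center : Set Q := S.commutant ∩ S.lnuc ∩ S.mnuc ∩ S.rnuc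

/-- The left translation `L_a` as a map. -/
def leftMul (a : Q) : Q → Q := fun x => S.mul a x

/-- The left translation `L_a` as a permutation of `Q`. -/
def leftPerm (a : Q) : Equiv.Perm Q :=
  ⟨fun x => S.mul a x, fun x => S.ldiv a x, S.ldiv_mul a, S.mul_ldiv a⟩

/-- The right translation `R_a` as a permutation of `Q`. -/
def rightPerm (a : Q) : Equiv.Perm Q :=
  ⟨fun x => S.mul x a, fun x => S.rdiv x a, fun x => S.mul_rdiv a x, fun x => S.rdiv_mul a x⟩

/-- The multiplication group `Mlt(Q) = ⟨L_x, R_x : x ∈ Q⟩ ≤ Sym(Q)`. -/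
def Mlt : Subgroup (Equiv.Perm Q) :=
  Subgroup.closure (Set.range S.leftPerm ∪ Set.range S.rightPerm)

/-- `x^n = L_x^n(e)` for natural `n`. -/
def npow (a : Q) (n : ℕ) : Q := (S.leftPerm a ^ n) S.e

/-- `x^n = L_x^n(e)` for integer `n`. -/
def zpow (a : Q) (n : ℤ) : Q := (S.leftPerm a ^ n) S.e

/-- The order of an element: the least `n > 0` with `x^n = e` (or `0` if none exists). -/
noncomputable def lorder (a : Q) : ℕ := sInf {n : ℕ | 0 < n ∧ S.npow a n = S.e}

/-- A subloop: contains `e`, closed under multiplication and both divisions. -/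
def IsSubloop (N : Set Q) : Prop :=
  S.e ∈ N ∧ (∀ a ∈ N, ∀ b ∈ N, S.mul a b ∈ N) ∧
    (∀ a ∈ N, ∀ b ∈ N, S.ldiv a b ∈ N) ∧ (∀ a ∈ N, ∀ b ∈ N, S.rdiv a b ∈ N)

/-- A normal subloop: a subloop with `xN = Nx`, `(xN)y = x(Ny)`, `N(xy) = (Nx)y`
elementwise as sets. -/
def IsNormalSubloop (N : Set Q) : Prop :=
  S.IsSubloop N ∧
  (∀ x : Q, (fun a => S.mul x a) '' N = (fun a => S.mul a x) '' N) ∧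
  (∀ x y : Q, (fun a => S.mul (S.mul x a) y) '' N = (fun a => S.mul x (S.mul a y)) '' N) ∧
  (∀ x y : Q, (fun a => S.mul a (S.mul x y)) '' N = (fun a => S.mul (S.mul a x) y) '' N)

/-- A loop is simple if its only normal subloops are `{e}` and `Q`. -/
def IsSimple : Prop :=
  ∀ N : Set Q, S.IsNormalSubloop N → N = {S.e} ∨ N = Set.univ

lemma mul_rinv (x : Q) : S.mul x (S.rinv x) = S.e := S.mul_ldiv x S.e

lemma linv_mul (x : Q) : S.mul (S.linv x) x = S.e := S.rdiv_mul x S.e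

lemma linv_rinv (x : Q) : S.linv (S.rinv x) = x := by
  have h := S.mul_rdiv (S.rinv x) x
  rw [S.mul_rinv] at h
  exact h

lemma rinv_linv (x : Q) : S.rinv (S.linv x) = x := by
  have h := S.ldiv_mul (S.linv x) x
  rw [S.linv_mul] at h
  exact h

lemma rinv_e : S.rinv S.e = S.e := by
  have h := S.ldiv_mul S.e S.e
  rw [S.one_mul] at h
  exact h

lemma rdiv_e (x : Q) : S.rdiv x S.e = x := by
  have h := S.mul_rdiv S.e x
  rw [S.mul_one] at h
  exact h

/-- The principal right isostrophe `(Q, ∘)` of `(Q, ·)`, with `x ∘ y = x / (y^r)`,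
right division `x // y = x·(y^r)` and left division `x \\ y = (y \ x)^ℓ`. -/
def iso : LoopStr Q where
  mul x y := S.rdiv x (S.rinv y)
  e := S.e
  ldiv x y := S.linv (S.ldiv y x)
  rdiv x y := S.mul x (S.rinv y)
  one_mul x := S.linv_rinv x
  mul_one x := by
    show S.rdiv x (S.rinv S.e) = x
    rw [S.rinv_e, S.rdiv_e]
  mul_ldiv a b := by
    show S.rdiv a (S.rinv (S.linv (S.ldiv b a))) = b
    rw [S.rinv_linv]
    have h := S.mul_rdiv (S.ldiv b a) b
    rw [S.mul_ldiv] at h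
    exact h
  ldiv_mul a b := by
    show S.linv (S.ldiv (S.rdiv a (S.rinv b)) a) = b
    have h := S.ldiv_mul (S.rdiv a (S.rinv b)) (S.rinv b)
    rw [S.rdiv_mul] at h
    rw [h, S.linv_rinv]
  rdiv_mul a b := by
    show S.rdiv (S.mul b (S.rinv a)) (S.rinv a) = b
    exact S.mul_rdiv (S.rinv a) b
  mul_rdiv a b := by
    show S.mul (S.rdiv b (S.rinv a)) (S.rinv a) = b
    exact S.rdiv_mul (S.rinv a) b

end LoopStr

namespace LoopStr

variable {Q P : Type*} (S : LoopStr Q) (T : LoopStr P)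

/-- `(α, β, γ)` is a homotopism of loops from `S` to `T`. For `S = T` and bijective `α`, `β`, `γ`,
it is an autotopism. The maps are encoded as plain functions. -/
def IsHomotopism (α β γ : Q → P) : Prop :=
  ∀ x y, T.mul (α x) (β y) = γ (S.mul x y)

lemma rdiv_eq_iff {x y z : Q} : S.rdiv x y = z ↔ S.mul z y = x :=
  ⟨fun h ↦ h ▸ S.rdiv_mul y x, fun h ↦ h ▸ S.mul_rdiv y z⟩

lemma iso_mul_eq_iff {x y z : Q} : S.iso.mul x y = z ↔ S.mul z (S.rinv y) = x :=
  S.rdiv_eq_iff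

lemma rinv_surjective : Function.Surjective S.rinv :=
  Function.RightInverse.surjective S.rinv_linv

lemma isHomotopism_iff_forall_mul_eq {α β γ : Q → P} :
    S.IsHomotopism T α β γ ↔ ∀ x y z, S.mul x y = z → T.mul (α x) (β y) = γ z := by
  simp only [IsHomotopism, forall_eq']

end LoopStr

/-- By `LoopStr.iso_mul_eq_iff`, the graph of `∘` is that of `·` with the outer coordinates
exchanged and the middle one transported along `ρ`; a homotopism is a triple of maps that
carries one graph into the other. -/
theorem iso_autotopism_iff_general {Q P : Type*} (S : LoopStr Q) (T : LoopStr P)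
    (α β γ : Q → P) :
    S.iso.IsHomotopism T.iso α β γ ↔ S.IsHomotopism T γ (T.rinv ∘ β ∘ S.linv) α := by
  simp only [LoopStr.isHomotopism_iff_forall_mul_eq]
  calc
    (∀ x y z, S.iso.mul x y = z → T.iso.mul (α x) (β y) = γ z)
    _ ↔ ∀ x y z, S.mul z (S.rinv y) = x → T.mul (γ z) (T.rinv (β y)) = α x := by
      simp only [LoopStr.iso_mul_eq_iff]
    _ ↔ ∀ z y x, S.mul z (S.rinv y) = x → T.mul (γ z) (T.rinv (β y)) = α x :=
      ⟨fun h z y x ↦ h x y z, fun h x y z ↦ h z y x⟩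
    _ ↔ ∀ z y x, S.mul z y = x → T.mul (γ z) ((T.rinv ∘ β ∘ S.linv) y) = α x := by
      refine forall_congr' fun z ↦ (S.rinv_surjective.forall.trans ?_).symm
      simp only [Function.comp_apply, S.linv_rinv]

/-- For bijections `α β γ : Q → Q`, `(α,β,γ)` is an autotopism of the
principal right isostrophe `(Q,∘)` iff `(γ, ρ∘β∘λ, α)` is an autotopism of `(Q,·)`. -/
theorem iso_autotopism_iff {Q : Type*} (S : LoopStr Q) (α β γ : Q → Q)
    (hα : Function.Bijective α) (hβ : Function.Bijective β) (hγ : Function.Bijective γ) :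
    (∀ x y : Q, S.iso.mul (α x) (β y) = γ (S.iso.mul x y)) ↔
    (∀ x y : Q, S.mul (γ x) ((S.rinv ∘ β ∘ S.linv) y) = α (S.mul x y)) :=
  iso_autotopism_iff_general S S α β γ
end

section
/- Let (Q,·,e) be a loop with left and middle nuclear squares. For all a ∈ Nuc_ℓ(Q) ∩ Nuc_m(Q) and all x ∈ Q, the element (x·a)·x = x·(a·x) (well-defined since a ∈ Nuc_m(Q)) again lies in Nuc_ℓ(Q) ∩ Nuc_m(Q). -/
/-! Since `a` lies in the left nucleus, the square of `a·x` is `a·(x·(a·x))`. Both this square and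
`a` lie in the left and middle nuclei, and each nucleus lets us cancel the left factor `a`. -/

namespace LoopStr

variable {Q : Type*} (S : LoopStr Q)

lemma mul_left_cancel {a x y : Q} (h : S.mul a x = S.mul a y) : x = y :=
  (S.leftPerm a).injective h

lemma mem_lnuc_of_mul_mem_lnuc {a u : Q} (ha : a ∈ S.lnuc) (hau : S.mul a u ∈ S.lnuc) :
    u ∈ S.lnuc := by
  intro x y
  apply S.mul_left_cancel (a := a)
  calc S.mul a (S.mul (S.mul u x) y)
      = S.mul (S.mul (S.mul a u) x) y := by rw [← ha, ← ha]
    _ = S.mul (S.mul a u) (S.mul x y) := hau x y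
    _ = S.mul a (S.mul u (S.mul x y)) := ha u (S.mul x y)

lemma linv_mul_cancel_left {a : Q} (ha : a ∈ S.mnuc) (x : Q) :
    S.mul (S.linv a) (S.mul a x) = x := by
  rw [← ha, S.linv_mul, S.one_mul]

lemma mul_assoc_of_mul_mem_mnuc {a u : Q} (ha : a ∈ S.mnuc) (hau : S.mul a u ∈ S.mnuc)
    (y : Q) : S.mul (S.mul a u) y = S.mul a (S.mul u y) := by
  apply S.mul_left_cancel (a := S.linv a)
  rw [← hau, S.linv_mul_cancel_left ha, S.linv_mul_cancel_left ha]

lemma mem_mnuc_of_mul_mem_mnuc {a u : Q} (ha : a ∈ S.mnuc) (hau : S.mul a u ∈ S.mnuc) :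
    u ∈ S.mnuc := by
  intro x y
  obtain ⟨z, rfl⟩ : ∃ z, S.mul z a = x := (S.rightPerm a).surjective x
  calc S.mul (S.mul (S.mul z a) u) y
      = S.mul (S.mul z (S.mul a u)) y := by rw [ha]
    _ = S.mul z (S.mul (S.mul a u) y) := hau z y
    _ = S.mul z (S.mul a (S.mul u y)) := by rw [S.mul_assoc_of_mul_mem_mnuc ha hau]
    _ = S.mul (S.mul z a) (S.mul u y) := (ha z (S.mul u y)).symm

end LoopStr

theorem xax_in_lmnuc_general {Q : Type*} (S : LoopStr Q) {a x : Q}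
    (ha : a ∈ S.lnuc ∩ S.mnuc) (hax : S.mul (S.mul a x) (S.mul a x) ∈ S.lnuc ∩ S.mnuc) :
    S.mul (S.mul x a) x = S.mul x (S.mul a x) ∧
    S.mul (S.mul x a) x ∈ S.lnuc ∩ S.mnuc := by
  obtain ⟨ha_left, ha_middle⟩ := ha
  have xax_assoc : S.mul (S.mul x a) x = S.mul x (S.mul a x) := ha_middle x x
  have square_eq : S.mul (S.mul a x) (S.mul a x) = S.mul a (S.mul x (S.mul a x)) :=
    ha_left x (S.mul a x)
  rw [square_eq] at hax
  rw [xax_assoc]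
  exact ⟨rfl, S.mem_lnuc_of_mul_mem_lnuc ha_left hax.1,
    S.mem_mnuc_of_mul_mem_mnuc ha_middle hax.2⟩

/-- In a loop with left and middle nuclear squares, if
`a ∈ Nuc_ℓ(Q) ∩ Nuc_m(Q)` then for every `x`, `(x·a)·x = x·(a·x)` lies in
`Nuc_ℓ(Q) ∩ Nuc_m(Q)`. -/
theorem xax_in_lmnuc {Q : Type*} (S : LoopStr Q)
    (h : ∀ x : Q, S.mul x x ∈ S.lnuc ∩ S.mnuc)
    (a : Q) (ha : a ∈ S.lnuc ∩ S.mnuc) (x : Q) :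
    S.mul (S.mul x a) x = S.mul x (S.mul a x) ∧
    S.mul (S.mul x a) x ∈ S.lnuc ∩ S.mnuc :=
  xax_in_lmnuc_general S ha (h (S.mul a x))
end

section
/- Let (Q,·,e) be a loop with left and middle nuclear squares, let a ∈ Nuc_ℓ(Q) ∩ Nuc_m(Q) and x ∈ Q. Then L_x^{-1} ∘ L_a ∘ L_x = L_{x\(a·x)}, and x\(a·x) lies in Nuc_ℓ(Q) ∩ Nuc_m(Q). -/
/-!
Write `N` for `Nuc_ℓ ∩ Nuc_m`, which is closed under products and inverses. If `x · y ∈ N`, then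
`y / x = y² · (x · y)⁻¹`, which lies in `N` because squares do. For `y = x \ (a · x²)` we have
`x · y = a · x² ∈ N`, so `c = y / x ∈ N`, and `(x · c) · x = x · (c · x) = x · y = (a · x) · x`.
Cancelling `x` gives `c = x \ (a · x)`.
-/

namespace LoopStr

variable {Q : Type*} (S : LoopStr Q) {a b c u v x y : Q}

lemma mul_left_cancel_s9 (h : S.mul a b = S.mul a c) : b = c :=
  (S.leftPerm a).injective h

lemma mul_right_cancel (h : S.mul b a = S.mul c a) : b = c :=
  (S.rightPerm a).injective h

lemma ldiv_eq_iff_eq_mul : S.ldiv a b = c ↔ b = S.mul a c :=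
  (S.leftPerm a).symm_apply_eq

lemma rdiv_eq_iff_eq_mul : S.rdiv b a = c ↔ b = S.mul c a :=
  (S.rightPerm a).symm_apply_eq

lemma mul_mem_lnuc (hu : u ∈ S.lnuc) (hv : v ∈ S.lnuc) : S.mul u v ∈ S.lnuc := by
  intro x y
  rw [hu, hu, hv, hu]

lemma mul_mem_mnuc (hu : u ∈ S.mnuc) (hv : v ∈ S.mnuc) : S.mul u v ∈ S.mnuc := by
  intro x y
  rw [← hu, hv, hu, hv]

lemma mul_linv_of_mem_lnuc (hv : v ∈ S.lnuc) : S.mul v (S.linv v) = S.e := by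
  apply S.mul_right_cancel (a := v)
  rw [hv, S.linv_mul, S.mul_one, S.one_mul]

lemma linv_eq_rinv_of_mem_mnuc (hv : v ∈ S.mnuc) : S.linv v = S.rinv v :=
  calc
    S.linv v = S.mul (S.linv v) (S.mul v (S.rinv v)) := by rw [S.mul_rinv, S.mul_one]
    _ = S.mul (S.mul (S.linv v) v) (S.rinv v) := (hv _ _).symm
    _ = S.rinv v := by rw [S.linv_mul, S.one_mul]

lemma linv_mem_lnuc (hv : v ∈ S.lnuc) : S.linv v ∈ S.lnuc := by
  have mul_linv_mul (z : Q) : S.mul v (S.mul (S.linv v) z) = z := by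
    rw [← hv, S.mul_linv_of_mem_lnuc hv, S.one_mul]
  intro x y
  apply S.mul_left_cancel_s9 (a := v)
  rw [← hv, mul_linv_mul, mul_linv_mul]

lemma linv_mem_mnuc (hv : v ∈ S.mnuc) : S.linv v ∈ S.mnuc := by
  have linv_mul_mul (z : Q) : S.mul (S.linv v) (S.mul v z) = z := by
    rw [← hv, S.linv_mul, S.one_mul]
  have mul_mul_linv (z : Q) : S.mul (S.mul z v) (S.linv v) = z := by
    rw [hv, S.linv_eq_rinv_of_mem_mnuc hv, S.mul_rinv, S.mul_one]
  intro x y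
  obtain ⟨x, rfl⟩ := (S.rightPerm v).surjective x
  obtain ⟨y, rfl⟩ := (S.leftPerm v).surjective y
  change S.mul (S.mul (S.mul x v) (S.linv v)) (S.mul v y)
    = S.mul (S.mul x v) (S.mul (S.linv v) (S.mul v y))
  rw [mul_mul_linv, linv_mul_mul, hv]

lemma rdiv_eq_mul_self_mul_linv (hy : S.mul y y ∈ S.lnuc) (hxy : S.mul x y ∈ S.lnuc) :
    S.rdiv y x = S.mul (S.mul y y) (S.linv (S.mul x y)) := by
  have hprod := S.mul_mem_lnuc hy (S.linv_mem_lnuc hxy)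
  rw [S.rdiv_eq_iff_eq_mul]
  apply S.mul_right_cancel (a := y)
  rw [hprod, hy, S.linv_mul, S.mul_one]

lemma rdiv_mem_lnuc_inter_mnuc (hy : S.mul y y ∈ S.lnuc ∩ S.mnuc)
    (hxy : S.mul x y ∈ S.lnuc ∩ S.mnuc) : S.rdiv y x ∈ S.lnuc ∩ S.mnuc := by
  rw [S.rdiv_eq_mul_self_mul_linv hy.1 hxy.1]
  exact ⟨S.mul_mem_lnuc hy.1 (S.linv_mem_lnuc hxy.1),
    S.mul_mem_mnuc hy.2 (S.linv_mem_mnuc hxy.2)⟩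

lemma ldiv_mul_eq_rdiv_ldiv (ha : a ∈ S.lnuc)
    (hc : S.rdiv (S.ldiv x (S.mul a (S.mul x x))) x ∈ S.mnuc) :
    S.ldiv x (S.mul a x) = S.rdiv (S.ldiv x (S.mul a (S.mul x x))) x := by
  rw [S.ldiv_eq_iff_eq_mul]
  apply S.mul_right_cancel (a := x)
  rw [hc, S.rdiv_mul, S.mul_ldiv, ha]

lemma ldiv_mul_mem_lnuc_inter_mnuc (h : ∀ x : Q, S.mul x x ∈ S.lnuc ∩ S.mnuc)
    (ha : a ∈ S.lnuc ∩ S.mnuc) (x : Q) :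
    S.ldiv x (S.mul a x) ∈ S.lnuc ∩ S.mnuc := by
  have hxy : S.mul x (S.ldiv x (S.mul a (S.mul x x))) ∈ S.lnuc ∩ S.mnuc := by
    rw [S.mul_ldiv]
    exact ⟨S.mul_mem_lnuc ha.1 (h x).1, S.mul_mem_mnuc ha.2 (h x).2⟩
  have hc := S.rdiv_mem_lnuc_inter_mnuc (h _) hxy
  rwa [S.ldiv_mul_eq_rdiv_ldiv ha.1 hc.2]

lemma ldiv_comp_leftMul_comp_leftMul (ha : a ∈ S.lnuc)
    (hb : S.ldiv x (S.mul a x) ∈ S.mnuc) :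
    S.ldiv x ∘ S.leftMul a ∘ S.leftMul x = S.leftMul (S.ldiv x (S.mul a x)) := by
  funext y
  change S.ldiv x (S.mul a (S.mul x y)) = S.mul (S.ldiv x (S.mul a x)) y
  rw [S.ldiv_eq_iff_eq_mul, ← hb, S.mul_ldiv, ha]

end LoopStr

/-- In a loop with left and middle nuclear squares, for
`a ∈ Nuc_ℓ(Q) ∩ Nuc_m(Q)` and `x ∈ Q`, `L_x⁻¹ ∘ L_a ∘ L_x = L_{x \ (a·x)}`, and
`x \ (a·x)` lies in `Nuc_ℓ(Q) ∩ Nuc_m(Q)`.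
(Here `L_x⁻¹` is the map `y ↦ x \ y`.) -/
theorem conj_leftMul' {Q : Type*} (S : LoopStr Q)
    (h : ∀ x : Q, S.mul x x ∈ S.lnuc ∩ S.mnuc)
    (a : Q) (ha : a ∈ S.lnuc ∩ S.mnuc) (x : Q) :
    S.ldiv x ∘ S.leftMul a ∘ S.leftMul x = S.leftMul (S.ldiv x (S.mul a x)) ∧
    S.ldiv x (S.mul a x) ∈ S.lnuc ∩ S.mnuc := by
  have hb := S.ldiv_mul_mem_lnuc_inter_mnuc h ha x
  exact ⟨S.ldiv_comp_leftMul_comp_leftMul ha.1 hb.2, hb⟩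
end

section
/- Let (Q,·,e) be a loop with nuclear squares, i.e., x·x ∈ Nuc_ℓ(Q) ∩ Nuc_m(Q) ∩ Nuc_r(Q) for all x ∈ Q. Then the nucleus Nuc(Q) = Nuc_ℓ(Q) ∩ Nuc_m(Q) ∩ Nuc_r(Q) is a normal subloop of Q. -/
/-!
Let `N` be a subloop of the nucleus containing all squares. The conditions `(xN)y = x(Ny)` and
`N(xy) = (Nx)y` hold already elementwise. For `xN = Nx`, let `n ∈ N`; the product `(xn)x` lies in
`N` because `n · (xn)x = (nx)(nx)`. Dividing it by the square `xx` on the right gives `m ∈ N` with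
`mx = xn`, and dividing it by `xx` on the left gives `m ∈ N` with `xm = nx`.
-/

namespace LoopStr

variable {Q : Type*} {S : LoopStr Q}

lemma ldiv_eq_iff {a b c : Q} : S.ldiv a b = c ↔ b = S.mul a c :=
  (S.leftPerm a).symm_apply_eq

lemma rdiv_eq_iff_s13 {a b c : Q} : S.rdiv b a = c ↔ b = S.mul c a :=
  (S.rightPerm a).symm_apply_eq

lemma IsSubloop.inter {M N : Set Q} (hM : S.IsSubloop M) (hN : S.IsSubloop N) :
    S.IsSubloop (M ∩ N) := by
  obtain ⟨heM, hmulM, hldivM, hrdivM⟩ := hM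
  obtain ⟨heN, hmulN, hldivN, hrdivN⟩ := hN
  exact ⟨⟨heM, heN⟩,
    fun a ha b hb => ⟨hmulM a ha.1 b hb.1, hmulN a ha.2 b hb.2⟩,
    fun a ha b hb => ⟨hldivM a ha.1 b hb.1, hldivN a ha.2 b hb.2⟩,
    fun a ha b hb => ⟨hrdivM a ha.1 b hb.1, hrdivN a ha.2 b hb.2⟩⟩

lemma e_mem_lnuc : S.e ∈ S.lnuc := fun x y => by rw [S.one_mul, S.one_mul]

lemma e_mem_mnuc : S.e ∈ S.mnuc := fun x y => by rw [S.mul_one, S.one_mul]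

lemma e_mem_rnuc : S.e ∈ S.rnuc := fun x y => by rw [S.mul_one, S.mul_one]

lemma mul_mem_lnuc_s13 {a b : Q} (ha : a ∈ S.lnuc) (hb : b ∈ S.lnuc) : S.mul a b ∈ S.lnuc :=
  fun x y => by rw [ha, ha, hb, ha]

lemma mul_mem_mnuc_s13 {a b : Q} (ha : a ∈ S.mnuc) (hb : b ∈ S.mnuc) : S.mul a b ∈ S.mnuc :=
  fun x y => by rw [← ha, hb, ha, hb]

lemma mul_mem_rnuc {a b : Q} (ha : a ∈ S.rnuc) (hb : b ∈ S.rnuc) : S.mul a b ∈ S.rnuc :=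
  fun x y => by rw [← hb, ha, hb, hb]

lemma ldiv_mul_of_mem_lnuc {a : Q} (ha : a ∈ S.lnuc) (x y : Q) :
    S.mul (S.ldiv a x) y = S.ldiv a (S.mul x y) := by
  symm
  rw [ldiv_eq_iff, ← ha, S.mul_ldiv]

lemma rdiv_mul_of_mem_mnuc {a : Q} (ha : a ∈ S.mnuc) (x y : Q) :
    S.mul (S.rdiv x a) y = S.mul x (S.ldiv a y) := by
  calc S.mul (S.rdiv x a) y
      = S.mul (S.rdiv x a) (S.mul a (S.ldiv a y)) := by rw [S.mul_ldiv]
    _ = S.mul (S.mul (S.rdiv x a) a) (S.ldiv a y) := (ha _ _).symm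
    _ = S.mul x (S.ldiv a y) := by rw [S.rdiv_mul]

lemma mul_rdiv_of_mem_rnuc {a : Q} (ha : a ∈ S.rnuc) (x y : Q) :
    S.mul x (S.rdiv y a) = S.rdiv (S.mul x y) a := by
  symm
  rw [rdiv_eq_iff_s13, ha, S.rdiv_mul]

lemma rinv_mul_of_mem_lnuc {a : Q} (ha : a ∈ S.lnuc) (x : Q) :
    S.mul (S.rinv a) x = S.ldiv a x := by
  rw [rinv, ldiv_mul_of_mem_lnuc ha, S.one_mul]

lemma mul_rinv_of_mem_mnuc {a : Q} (ha : a ∈ S.mnuc) (x : Q) :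
    S.mul x (S.rinv a) = S.rdiv x a := by
  rw [rinv, ← rdiv_mul_of_mem_mnuc ha, S.mul_one]

lemma linv_mul_of_mem_mnuc {a : Q} (ha : a ∈ S.mnuc) (x : Q) :
    S.mul (S.linv a) x = S.ldiv a x := by
  rw [linv, rdiv_mul_of_mem_mnuc ha, S.one_mul]

lemma mul_linv_of_mem_rnuc {a : Q} (ha : a ∈ S.rnuc) (x : Q) :
    S.mul x (S.linv a) = S.rdiv x a := by
  rw [linv, mul_rdiv_of_mem_rnuc ha, S.mul_one]

lemma linv_eq_rinv_of_mem_mnuc_s13 {a : Q} (ha : a ∈ S.mnuc) : S.linv a = S.rinv a := by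
  rw [← S.mul_one (S.linv a), linv_mul_of_mem_mnuc ha, rinv]

lemma ldiv_mem_lnuc {a b : Q} (ha : a ∈ S.lnuc) (hb : b ∈ S.lnuc) : S.ldiv a b ∈ S.lnuc :=
  fun x y => by
    rw [ldiv_mul_of_mem_lnuc ha, ldiv_mul_of_mem_lnuc ha, ldiv_mul_of_mem_lnuc ha, hb]

lemma rdiv_mem_lnuc {a b : Q} (ha : a ∈ S.lnuc) (hb : b ∈ S.lnuc) : S.rdiv a b ∈ S.lnuc := by
  have hdiv : S.rdiv a b = S.mul a (S.rinv b) := by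
    rw [rdiv_eq_iff_s13, ha, rinv_mul_of_mem_lnuc hb, ldiv_eq_iff.2 (S.mul_one b).symm, S.mul_one]
  rw [hdiv]
  exact mul_mem_lnuc_s13 ha (ldiv_mem_lnuc hb e_mem_lnuc)

lemma rdiv_mem_rnuc {a b : Q} (ha : a ∈ S.rnuc) (hb : b ∈ S.rnuc) : S.rdiv a b ∈ S.rnuc :=
  fun x y => by
    rw [mul_rdiv_of_mem_rnuc hb, mul_rdiv_of_mem_rnuc hb, mul_rdiv_of_mem_rnuc hb, ha]

lemma ldiv_mem_rnuc {a b : Q} (ha : a ∈ S.rnuc) (hb : b ∈ S.rnuc) : S.ldiv a b ∈ S.rnuc := by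
  have hdiv : S.ldiv a b = S.mul (S.linv a) b := by
    rw [ldiv_eq_iff, ← hb, mul_linv_of_mem_rnuc ha, rdiv_eq_iff_s13.2 (S.one_mul a).symm, S.one_mul]
  rw [hdiv]
  exact mul_mem_rnuc (rdiv_mem_rnuc e_mem_rnuc ha) hb

lemma rinv_mem_mnuc {a : Q} (ha : a ∈ S.mnuc) : S.rinv a ∈ S.mnuc := fun x y => by
  rw [mul_rinv_of_mem_mnuc ha, rdiv_mul_of_mem_mnuc ha, ← linv_mul_of_mem_mnuc ha,
    linv_eq_rinv_of_mem_mnuc_s13 ha]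

lemma ldiv_mem_mnuc {a b : Q} (ha : a ∈ S.mnuc) (hb : b ∈ S.mnuc) : S.ldiv a b ∈ S.mnuc := by
  rw [← linv_mul_of_mem_mnuc ha, linv_eq_rinv_of_mem_mnuc_s13 ha]
  exact mul_mem_mnuc_s13 (rinv_mem_mnuc ha) hb

lemma rdiv_mem_mnuc {a b : Q} (ha : a ∈ S.mnuc) (hb : b ∈ S.mnuc) : S.rdiv a b ∈ S.mnuc := by
  rw [← mul_rinv_of_mem_mnuc hb]
  exact mul_mem_mnuc_s13 ha (rinv_mem_mnuc hb)

lemma isSubloop_lnuc : S.IsSubloop S.lnuc :=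
  ⟨e_mem_lnuc, fun _ ha _ hb => mul_mem_lnuc_s13 ha hb, fun _ ha _ hb => ldiv_mem_lnuc ha hb,
    fun _ ha _ hb => rdiv_mem_lnuc ha hb⟩

lemma isSubloop_mnuc : S.IsSubloop S.mnuc :=
  ⟨e_mem_mnuc, fun _ ha _ hb => mul_mem_mnuc_s13 ha hb, fun _ ha _ hb => ldiv_mem_mnuc ha hb,
    fun _ ha _ hb => rdiv_mem_mnuc ha hb⟩

lemma isSubloop_rnuc : S.IsSubloop S.rnuc :=
  ⟨e_mem_rnuc, fun _ ha _ hb => mul_mem_rnuc ha hb, fun _ ha _ hb => ldiv_mem_rnuc ha hb,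
    fun _ ha _ hb => rdiv_mem_rnuc ha hb⟩

lemma IsSubloop.mul_mul_mem {N : Set Q} (hN : S.IsSubloop N) {n x : Q} (hn : n ∈ N)
    (hnl : n ∈ S.lnuc) (hnm : n ∈ S.mnuc) (hsq : S.mul (S.mul n x) (S.mul n x) ∈ N) :
    S.mul (S.mul x n) x ∈ N := by
  obtain ⟨-, -, hldiv, -⟩ := hN
  have hfactor : S.mul (S.mul n x) (S.mul n x) = S.mul n (S.mul (S.mul x n) x) := by
    rw [hnl, hnm]
  rw [← ldiv_eq_iff.2 hfactor]
  exact hldiv n hn _ hsq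

lemma IsSubloop.image_mul_left_eq_image_mul_right {N : Set Q} (hN : S.IsSubloop N)
    (hnuc : N ⊆ S.lnuc ∩ S.mnuc ∩ S.rnuc) (hsq : ∀ x, S.mul x x ∈ N) (x : Q) :
    (fun a => S.mul x a) '' N = (fun a => S.mul a x) '' N := by
  have hconj {n : Q} (hn : n ∈ N) : S.mul (S.mul x n) x ∈ N :=
    hN.mul_mul_mem hn (hnuc hn).1.1 (hnuc hn).1.2 (hsq _)
  obtain ⟨-, -, hldiv, hrdiv⟩ := hN
  apply Set.Subset.antisymm
  · rintro _ ⟨n, hn, rfl⟩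
    have hm : S.rdiv (S.mul (S.mul x n) x) (S.mul x x) ∈ N := hrdiv _ (hconj hn) _ (hsq x)
    refine ⟨_, hm, (S.rightPerm x).injective ?_⟩
    exact ((hnuc hm).1.1 x x).trans (S.rdiv_mul _ _)
  · rintro _ ⟨n, hn, rfl⟩
    have hm : S.ldiv (S.mul x x) (S.mul (S.mul x n) x) ∈ N := hldiv _ (hsq x) _ (hconj hn)
    refine ⟨_, hm, (S.leftPerm x).injective ?_⟩
    calc S.mul x (S.mul x (S.ldiv (S.mul x x) (S.mul (S.mul x n) x)))
        = S.mul (S.mul x x) (S.ldiv (S.mul x x) (S.mul (S.mul x n) x)) := ((hnuc hm).2 x x).symm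
      _ = S.mul (S.mul x n) x := S.mul_ldiv _ _
      _ = S.mul x (S.mul n x) := (hnuc hn).1.2 x x

end LoopStr

theorem nuc_normal_general {Q : Type*} {S : LoopStr Q} {N : Set Q} (hN : S.IsSubloop N)
    (hnuc : N ⊆ S.lnuc ∩ S.mnuc ∩ S.rnuc) (hsq : ∀ x, S.mul x x ∈ N) :
    S.IsNormalSubloop N :=
  ⟨hN, hN.image_mul_left_eq_image_mul_right hnuc hsq,
    fun x y => Set.image_congr fun _ ha => (hnuc ha).1.2 x y,
    fun x y => Set.image_congr fun _ ha => ((hnuc ha).1.1 x y).symm⟩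

/-- In a loop with nuclear squares, the nucleus
`Nuc(Q) = Nuc_ℓ(Q) ∩ Nuc_m(Q) ∩ Nuc_r(Q)` is a normal subloop of `Q`. -/
theorem nuc_normal {Q : Type*} (S : LoopStr Q)
    (h : ∀ x : Q, S.mul x x ∈ S.lnuc ∩ S.mnuc ∩ S.rnuc) :
    S.IsNormalSubloop (S.lnuc ∩ S.mnuc ∩ S.rnuc) :=
  nuc_normal_general ((LoopStr.isSubloop_lnuc.inter LoopStr.isSubloop_mnuc).inter
    LoopStr.isSubloop_rnuc) subset_rfl h
end

section
/- Let (Q,·,e) be a loop with central squares, i.e., x·x ∈ Z(Q) for all x ∈ Q. Then Q is power-associative: defining integer powers by x^n = L_x^n(e) for n ∈ ℤ (where L_x^{-1} is the inverse bijection of L_x), one has x^m · x^n = x^{m+n} for all x ∈ Q and all integers m, n. -/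
/-!
Write `c = x · x`. If `L_x` commutes with `L_c`, then `c · x ^ n = L_x ^ n (c) = x ^ (n + 2)` for
every integer `n`. If moreover `c` lies in the left nucleus, then the identity
`x ^ (m + 2) · x ^ n = x ^ (m + 2 + n)` is the identity `x ^ m · x ^ n = x ^ (m + n)` with both
sides multiplied by `c` on the left. So the truth of the identity depends only on the parity of
`m`, and the cases `m = 0` and `m = 1` are immediate.
-/

namespace LoopStr

variable {Q : Type*} (S : LoopStr Q)

lemma leftPerm_apply (a b : Q) : S.leftPerm a b = S.mul a b := rfl

lemma mul_right_inj (a : Q) {b c : Q} : S.mul a b = S.mul a c ↔ b = c :=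
  (S.leftPerm a).injective.eq_iff

protected lemma zpow_zero (x : Q) : S.zpow x 0 = S.e := rfl

protected lemma zpow_one (x : Q) : S.zpow x 1 = x := S.mul_one x

protected lemma zpow_one_add (x : Q) (n : ℤ) : S.zpow x (1 + n) = S.mul x (S.zpow x n) := by
  rw [zpow, zpow_one_add, Equiv.Perm.mul_apply, leftPerm_apply, zpow]

variable {S}

lemma commute_leftPerm_of_mem_nuclei {a c : Q} (hl : c ∈ S.lnuc) (hm : c ∈ S.mnuc)
    (hca : S.mul c a = S.mul a c) : Commute (S.leftPerm a) (S.leftPerm c) := by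
  ext y
  calc S.mul a (S.mul c y) = S.mul (S.mul a c) y := (hm a y).symm
    _ = S.mul (S.mul c a) y := by rw [hca]
    _ = S.mul c (S.mul a y) := hl a y

lemma mul_self_mul_zpow {x : Q} (hx : Commute (S.leftPerm x) (S.leftPerm (S.mul x x))) (n : ℤ) :
    S.mul (S.mul x x) (S.zpow x n) = S.zpow x (n + 2) := by
  have zpow_two : (S.leftPerm x ^ (2 : ℤ)) S.e = S.mul x x := congrArg (S.mul x) (S.mul_one x)
  calc S.mul (S.mul x x) (S.zpow x n)
      = (S.leftPerm x ^ n) (S.mul (S.mul x x) S.e) :=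
        (DFunLike.congr_fun (hx.zpow_left n).eq S.e).symm
    _ = (S.leftPerm x ^ n) ((S.leftPerm x ^ (2 : ℤ)) S.e) := by rw [S.mul_one, zpow_two]
    _ = S.zpow x (n + 2) := by rw [zpow, zpow_add, Equiv.Perm.mul_apply]

lemma periodic_zpow_mul_zpow {x : Q} (hl : S.mul x x ∈ S.lnuc)
    (hx : Commute (S.leftPerm x) (S.leftPerm (S.mul x x))) (n : ℤ) :
    Function.Periodic (fun m ↦ S.mul (S.zpow x m) (S.zpow x n) = S.zpow x (m + n)) 2 := by
  intro m
  beta_reduce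
  rw [← mul_self_mul_zpow hx m, hl, add_right_comm, ← mul_self_mul_zpow hx (m + n), mul_right_inj]

end LoopStr

theorem central_squares_power_associative_general {Q : Type*} (S : LoopStr Q) {x : Q}
    (hl : S.mul x x ∈ S.lnuc) (hm : S.mul x x ∈ S.mnuc)
    (hx : S.mul (S.mul x x) x = S.mul x (S.mul x x)) (m n : ℤ) :
    S.mul (S.zpow x m) (S.zpow x n) = S.zpow x (m + n) := by
  have periodic :=
    LoopStr.periodic_zpow_mul_zpow hl (LoopStr.commute_leftPerm_of_mem_nuclei hl hm hx) n
  have zero : S.mul (S.zpow x 0) (S.zpow x n) = S.zpow x (0 + n) := by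
    rw [S.zpow_zero, S.one_mul, zero_add]
  have one : S.mul (S.zpow x 1) (S.zpow x n) = S.zpow x (1 + n) := by
    rw [S.zpow_one, S.zpow_one_add]
  obtain ⟨k, rfl | rfl⟩ := m.even_or_odd'
  · rw [mul_comm 2 k]
    exact (periodic.int_mul_eq k).mpr zero
  · rw [add_comm (2 * k), mul_comm 2 k]
    exact (periodic.int_mul k 1).mpr one

/-- A loop with central squares is power-associative:
with `x^n = L_x^n(e)` for `n ∈ ℤ`, one has `x^m · x^n = x^{m+n}`. -/
theorem central_squares_power_associative {Q : Type*} (S : LoopStr Q)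
    (h : ∀ x : Q, S.mul x x ∈ S.center) :
    ∀ (x : Q) (m n : ℤ), S.mul (S.zpow x m) (S.zpow x n) = S.zpow x (m + n) :=
  fun x ↦
    have ⟨⟨⟨hcomm, hl⟩, hm⟩, _⟩ := h x
    central_squares_power_associative_general S hl hm (hcomm x)
end
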